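/- The itinerary of an irrational real number under f_Γ contains neither of the three-letter blocks 202 and 404: for every irrational x and every n ∈ ℕ, if I(x)(n) = 2 and I(x)(n+1) = 0 then I(x)(n+2) = 4, and if I(x)(n) = 4 and I(x)(n+1) = 0 then I(x)(n+2) = 2. -/

import Mathlib

/-!
A symbol 2 followed by 0 means `y < -1` and `-1 ≤ y + 1 < 0`; a symbol 4 followed by 0 means
`1 ≤ y` and `0 ≤ y - 1 < 1`. The next step is `z ↦ -1 / z`, which sends `(-1, 0)` into `(1, ∞)` and
`(0, 1)` into `(-∞, -1)`. The endpoints `z = -1` and `z = 0` are excluded because `fGamma` preserves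
irrationality (`irrational_fGamma`, `irrational_iterate`).
-/

noncomputable def fGamma (x : ℝ) : ℝ :=
  if x ≤ -1 then x + 1
  else if x < 1 then -1 / x
  else x - 1

noncomputable def symb (x : ℝ) : ℕ :=
  if x < -1 then 2 else if x < 1 then 0 else 4

noncomputable def itin (x : ℝ) : ℕ → ℕ :=
  fun n => symb (fGamma^[n] x)

lemma irrational_fGamma {y : ℝ} (hy : Irrational y) : Irrational (fGamma y) := by
  unfold fGamma
  split_ifs
  · exact_mod_cast hy.add_intCast 1
  · have h := hy.inv.neg
    rwa [← one_div, ← neg_div] at h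
  · exact_mod_cast hy.sub_intCast 1

lemma irrational_iterate {x : ℝ} (hx : Irrational x) (n : ℕ) : Irrational (fGamma^[n] x) := by
  induction n with
  | zero => exact hx
  | succ k ih =>
    rw [Function.iterate_succ_apply']
    exact irrational_fGamma ih

lemma symb_eq_two {y : ℝ} : symb y = 2 ↔ y < -1 := by
  unfold symb; split_ifs <;> simp_all

lemma symb_eq_zero {y : ℝ} : symb y = 0 ↔ -1 ≤ y ∧ y < 1 := by
  unfold symb; split_ifs <;> simp_all

lemma symb_eq_four {y : ℝ} : symb y = 4 ↔ 1 ≤ y := by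
  unfold symb; split_ifs <;> simp_all; linarith

lemma fGamma_of_abs_lt {z : ℝ} (h₁ : -1 < z) (h₂ : z < 1) : fGamma z = -1 / z := by
  rw [fGamma, if_neg (not_le.mpr h₁), if_pos h₂]

theorem stmt_7 (x : ℝ) (hx : Irrational x) (n : ℕ) :
    (itin x n = 2 → itin x (n + 1) = 0 → itin x (n + 2) = 4) ∧
      (itin x n = 4 → itin x (n + 1) = 0 → itin x (n + 2) = 2) := by
  have hy := irrational_iterate hx n
  simp only [itin, Function.iterate_succ_apply']
  generalize fGamma^[n] x = y at hy ⊢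
  have hz := irrational_fGamma hy
  rw [symb_eq_two, symb_eq_zero, symb_eq_four, symb_eq_four, symb_eq_two]
  have hz1 : fGamma y ≠ -1 := by exact_mod_cast hz.ne_int (-1)
  have hz0 : fGamma y ≠ 0 := hz.ne_zero
  constructor
  · rintro h ⟨h₁, h₂⟩
    rw [fGamma_of_abs_lt (lt_of_le_of_ne h₁ hz1.symm) h₂]
    have hneg : fGamma y < 0 := by
      rw [fGamma, if_pos h.le]; linarith
    rw [le_div_iff_of_neg hneg]
    linarith
  · rintro h ⟨h₁, h₂⟩
    rw [fGamma_of_abs_lt (lt_of_le_of_ne h₁ hz1.symm) h₂]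
    have hnonneg : 0 ≤ fGamma y := by
      rw [fGamma, if_neg (by linarith), if_neg (by linarith)]; linarith
    rw [div_lt_iff₀ (lt_of_le_of_ne hnonneg hz0.symm)]
    linarith
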